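/- arXiv:1206.1472 — 2 statements merged into one kernel-verified Lean document; each statement's English description precedes it below -/
import Mathlib

section
/- (Ergodic theorem for quantum trajectories.) Let (ρ_n, X_n)_{n≥0} be the quantum trajectory process of the open quantum random walk. Then the Cesàro means (1/n) Σ_{i=1}^n ρ_i converge almost surely to a random density matrix θ_∞ which almost surely takes values in the set of invariant states of L, i.e. L(θ_∞) = θ_∞ almost surely. In particular, if L admits a unique invariant state ρ_∞, then (1/n) Σ_{i=1}^n ρ_i converges almost surely to ρ_∞. -/
open MeasureTheory Filter Matrix Finset
open scoped ComplexOrder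

noncomputable section

/-- The direction vectors `e_1, …, e_{2d}` in `ℤ^d`, with `e_{d+j} = -e_j`. -/
def dir (d : ℕ) (i : Fin (2 * d)) : Fin d → ℤ :=
  fun j => if (i : ℕ) < d then (if (j : ℕ) = (i : ℕ) then 1 else 0)
           else (if (j : ℕ) = (i : ℕ) - d then -1 else 0)

/-- The direction vectors viewed in `ℝ^d`. -/
def dirR (d : ℕ) (i : Fin (2 * d)) : Fin d → ℝ := fun j => (dir d i j : ℝ)

instance {k : ℕ} : MeasurableSpace (Matrix (Fin k) (Fin k) ℂ) := MeasurableSpace.pi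

/-- A density matrix: positive semidefinite with trace one. -/
def IsDensity {k : ℕ} (ρ : Matrix (Fin k) (Fin k) ℂ) : Prop := ρ.PosSemidef ∧ ρ.trace = 1

/-- The quantum trajectory process of the open quantum random walk. -/
structure IsQTraj {k d : ℕ} {Ω : Type} {mΩ : MeasurableSpace Ω}
    (A : Fin (2 * d) → Matrix (Fin k) (Fin k) ℂ)
    (μ : Measure Ω) (ℱ : Filtration ℕ mΩ)
    (ρ : ℕ → Ω → Matrix (Fin k) (Fin k) ℂ)
    (X : ℕ → Ω → Fin d → ℤ) : Prop where
  density : ∀ n, ∀ᵐ ω ∂μ, IsDensity (ρ n ω)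
  adapted_ρ : ∀ n, Measurable[ℱ n] (ρ n)
  adapted_X : ∀ n, Measurable[ℱ n] (X n)
  prob : ∀ (n : ℕ) (j : Fin (2 * d)),
    μ[(fun ω => if X (n + 1) ω = X n ω + dir d j then (1 : ℝ) else 0) | ℱ n]
      =ᵐ[μ] fun ω => ((A j * ρ n ω * (A j)ᴴ).trace).re
  update : ∀ (n : ℕ) (j : Fin (2 * d)), ∀ᵐ ω ∂μ,
    X (n + 1) ω = X n ω + dir d j →
      ρ (n + 1) ω = ((A j * ρ n ω * (A j)ᴴ).trace)⁻¹ • (A j * ρ n ω * (A j)ᴴ)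

/-!
The conditional expectation of `ρ (n + 1)` given the past is `L (ρ n)`. Since `L` is positive and
preserves the trace, its orbits are bounded, so the fixed space and the range of `L - 1` are
complementary. The component of `ρ n` in the fixed space is then a bounded martingale, which
converges, and so do its Cesàro means. On the other hand the averages of `L (ρ i) - ρ i` tend to
zero: up to a telescoping term they are averages of bounded martingale differences, to which the
strong law of large numbers applies. As `L - 1` is injective on its range, a sequence whose
fixed component converges and whose image under `L - 1` tends to zero converges to a fixed point,
and this determines the limit of the Cesàro means.
-/

open scoped Topology NNReal

section Cesaro

lemma sum_range_eq_smul_sum_sub_sum_sum {M : Type*} [AddCommGroup M] [Module ℝ M] (u : ℕ → M)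
    (n : ℕ) :
    ∑ i ∈ range n, u i = (n : ℝ) • ∑ i ∈ range n, ((i : ℝ) + 1)⁻¹ • u i -
      ∑ m ∈ range n, ∑ i ∈ range m, ((i : ℝ) + 1)⁻¹ • u i := by
  induction n with
  | zero => simp
  | succ n ih =>
    have hn : (n : ℝ) + 1 ≠ 0 := by positivity
    rw [sum_range_succ, ih, sum_range_succ _ n, sum_range_succ _ n]
    push_cast
    rw [smul_add, smul_inv_smul₀ hn, add_smul, one_smul]
    abel

variable {E : Type*} [NormedAddCommGroup E] [NormedSpace ℝ E]

lemma tendsto_inv_nat_smul_of_norm_le {u : ℕ → E} {C : ℝ} (hu : ∀ n, ‖u n‖ ≤ C) :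
    Tendsto (fun n : ℕ => (n : ℝ)⁻¹ • u n) atTop (𝓝 0) :=
  (tendsto_inv_atTop_nhds_zero_nat (𝕜 := ℝ)).zero_smul_isBoundedUnder_le
    (isBoundedUnder_of ⟨C, hu⟩)

lemma tendsto_inv_nat_smul_sub_of_norm_le {u : ℕ → E} {C : ℝ} (hu : ∀ n, ‖u n‖ ≤ C) :
    Tendsto (fun n : ℕ => (n : ℝ)⁻¹ • (u n - u 0)) atTop (𝓝 0) :=
  tendsto_inv_nat_smul_of_norm_le (C := C + C) fun n =>
    (norm_sub_le _ _).trans (add_le_add (hu n) (hu 0))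

lemma tendsto_average_Icc_of_tendsto_average_range {u : ℕ → E} {C : ℝ} {x : E}
    (hu : ∀ n, ‖u n‖ ≤ C)
    (h : Tendsto (fun n : ℕ => (n : ℝ)⁻¹ • ∑ i ∈ range n, u i) atTop (𝓝 x)) :
    Tendsto (fun n : ℕ => (n : ℝ)⁻¹ • ∑ i ∈ Icc 1 n, u i) atTop (𝓝 x) := by
  have hshift (n : ℕ) : ∑ i ∈ Icc 1 n, u i = ∑ i ∈ range n, u i + (u n - u 0) := by
    rw [← Ico_add_one_right_eq_Icc, sum_Ico_eq_sub _ (by lia), sum_range_succ, sum_range_one]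
    abel
  simpa [hshift] using h.add (tendsto_inv_nat_smul_sub_of_norm_le hu)

/-- **Kronecker's lemma** for the weights `1 / (i + 1)`. -/
lemma tendsto_average_zero_of_tendsto_sum_inv_smul {u : ℕ → E} {x : E}
    (h : Tendsto (fun n : ℕ => ∑ i ∈ range n, ((i : ℝ) + 1)⁻¹ • u i) atTop (𝓝 x)) :
    Tendsto (fun n : ℕ => (n : ℝ)⁻¹ • ∑ i ∈ range n, u i) atTop (𝓝 0) := by
  have hdiff := h.sub h.cesaro_smul
  rw [sub_self] at hdiff
  refine hdiff.congr' ?_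
  filter_upwards [eventually_ne_atTop 0] with n hn
  rw [sum_range_eq_smul_sum_sub_sum_sum u n, smul_sub, inv_smul_smul₀ (Nat.cast_ne_zero.2 hn)]

end Cesaro

section AlmostSureLimits

variable {Ω E F : Type*} {mΩ : MeasurableSpace Ω} {μ : Measure Ω} {ℱ : Filtration ℕ mΩ}
  [NormedAddCommGroup E] [NormedSpace ℝ E] [NormedAddCommGroup F] [NormedSpace ℝ F]

lemma ae_exists_tendsto_of_forall_dual [FiniteDimensional ℝ E] {f : ℕ → Ω → E}
    (hf : ∀ φ : E →L[ℝ] ℝ, ∀ᵐ ω ∂μ, ∃ c, Tendsto (fun n => φ (f n ω)) atTop (𝓝 c)) :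
    ∀ᵐ ω ∂μ, ∃ x, Tendsto (fun n => f n ω) atTop (𝓝 x) := by
  let b := Module.finBasis ℝ E
  filter_upwards [ae_all_iff.2 fun i => hf (b.coord i).toContinuousLinearMap] with ω hω
  choose c hc using hω
  refine ⟨∑ i, c i • b i, ?_⟩
  simpa only [LinearMap.coe_toContinuousLinearMap', b.coord_apply, b.sum_repr] using
    tendsto_finsetSum univ fun i _ => (hc i).smul_const (b i)

lemma martingale_clm_comp [CompleteSpace E] [CompleteSpace F] {f : ℕ → Ω → E}
    (hf : Martingale f ℱ μ) (φ : E →L[ℝ] F) : Martingale (fun n ω => φ (f n ω)) ℱ μ := by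
  refine ⟨fun n => φ.continuous.comp_stronglyMeasurable (hf.stronglyMeasurable n),
    fun i j hij => (φ.comp_condExp_comm (hf.integrable j)).symm.trans ?_⟩
  filter_upwards [hf.condExp_ae_eq hij] with ω hω
  exact congrArg φ hω

lemma ae_exists_tendsto_of_martingale [FiniteDimensional ℝ E] [CompleteSpace E]
    [IsFiniteMeasure μ] {f : ℕ → Ω → E} (hf : Martingale f ℱ μ) {R : ℝ≥0}
    (hR : ∀ n, eLpNorm (f n) 1 μ ≤ R) :
    ∀ᵐ ω ∂μ, ∃ x, Tendsto (fun n => f n ω) atTop (𝓝 x) := by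
  refine ae_exists_tendsto_of_forall_dual fun φ =>
    (martingale_clm_comp hf φ).submartingale.exists_ae_tendsto_of_bdd (R := ‖φ‖₊ * R) fun n => ?_
  calc eLpNorm (fun ω => φ (f n ω)) 1 μ
      ≤ ‖φ‖₊ • eLpNorm (f n) 1 μ :=
        eLpNorm_le_nnreal_smul_eLpNorm_of_ae_le_mul (ae_of_all _ fun ω => φ.le_opNNNorm _) 1
    _ ≤ ↑(‖φ‖₊ * R) := by
        rw [ENNReal.smul_def, smul_eq_mul, ENNReal.coe_mul]
        gcongr
        exact hR n

end AlmostSureLimits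

/-- Martingale difference sequences for `ℱ`, indexed so that `D n` is the increment from time `n`
to time `n + 1`. -/
structure IsMartingaleDiff {Ω E : Type*} {mΩ : MeasurableSpace Ω} [NormedAddCommGroup E]
    [NormedSpace ℝ E] [CompleteSpace E] (D : ℕ → Ω → E) (ℱ : Filtration ℕ mΩ) (μ : Measure Ω) :
    Prop where
  stronglyMeasurable : ∀ n, StronglyMeasurable[ℱ (n + 1)] (D n)
  integrable : ∀ n, Integrable (D n) μ
  condExp_eq_zero : ∀ n, μ[D n | ℱ n] =ᵐ[μ] 0

namespace IsMartingaleDiff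

variable {Ω E F : Type*} {mΩ : MeasurableSpace Ω} {μ : Measure Ω} {ℱ : Filtration ℕ mΩ}
  [NormedAddCommGroup E] [NormedSpace ℝ E] [CompleteSpace E]
  [NormedAddCommGroup F] [NormedSpace ℝ F] [CompleteSpace F]

lemma const_smul {D : ℕ → Ω → E} (hD : IsMartingaleDiff D ℱ μ) (c : ℕ → ℝ) :
    IsMartingaleDiff (fun n => c n • D n) ℱ μ where
  stronglyMeasurable n := (hD.stronglyMeasurable n).const_smul (c n)
  integrable n := (hD.integrable n).smul (c n)
  condExp_eq_zero n := by
    filter_upwards [condExp_smul (c n) (D n) (ℱ n), hD.condExp_eq_zero n] with ω hsmul hzero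
    rw [hsmul, Pi.smul_apply, hzero, Pi.zero_apply, smul_zero]

lemma clm_comp {D : ℕ → Ω → E} (hD : IsMartingaleDiff D ℱ μ) (φ : E →L[ℝ] F) :
    IsMartingaleDiff (fun n ω => φ (D n ω)) ℱ μ where
  stronglyMeasurable n := φ.continuous.comp_stronglyMeasurable (hD.stronglyMeasurable n)
  integrable n := φ.integrable_comp (hD.integrable n)
  condExp_eq_zero n := by
    filter_upwards [φ.comp_condExp_comm (m := ℱ n) (hD.integrable n), hD.condExp_eq_zero n]
      with ω hcomm hzero
    exact hcomm.symm.trans (by simp [hzero])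

lemma martingale_sum [IsFiniteMeasure μ] {D : ℕ → Ω → E} (hD : IsMartingaleDiff D ℱ μ) :
    Martingale (fun n => ∑ i ∈ range n, D i) ℱ μ := by
  refine martingale_of_condExp_sub_eq_zero_nat (fun n => ?_)
    (fun n => integrable_finsetSum' _ fun i _ => hD.integrable i) fun n => ?_
  · exact Finset.stronglyMeasurable_sum _ fun i hi =>
      (hD.stronglyMeasurable i).mono (ℱ.mono (mem_range.1 hi))
  · simpa [sum_range_succ] using hD.condExp_eq_zero n

lemma integral_sum_mul_eq_zero [IsFiniteMeasure μ] {D : ℕ → Ω → ℝ}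
    (hD : IsMartingaleDiff D ℱ μ) (hD2 : ∀ n, MemLp (D n) 2 μ) (n : ℕ) :
    ∫ ω, (∑ i ∈ range n, D i) ω * D n ω ∂μ = 0 := by
  have hpull := condExp_mul_of_stronglyMeasurable_left (hD.martingale_sum.stronglyMeasurable n)
    ((memLp_finsetSum' _ fun i _ => hD2 i).integrable_mul (hD2 n)) (hD.integrable n)
  have hzero : μ[(∑ i ∈ range n, D i) * D n | ℱ n] =ᵐ[μ] 0 := by
    filter_upwards [hpull, hD.condExp_eq_zero n] with ω h h'
    rw [h, Pi.mul_apply, h', Pi.zero_apply, mul_zero]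
  calc ∫ ω, (∑ i ∈ range n, D i) ω * D n ω ∂μ
      = ∫ ω, (μ[(∑ i ∈ range n, D i) * D n | ℱ n]) ω ∂μ := (integral_condExp (ℱ.le n)).symm
    _ = 0 := by simp [integral_congr_ae hzero]

lemma integral_sum_sq [IsFiniteMeasure μ] {D : ℕ → Ω → ℝ} (hD : IsMartingaleDiff D ℱ μ)
    (hD2 : ∀ n, MemLp (D n) 2 μ) (n : ℕ) :
    ∫ ω, (∑ i ∈ range n, D i) ω ^ 2 ∂μ = ∑ i ∈ range n, ∫ ω, D i ω ^ 2 ∂μ := by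
  induction n with
  | zero => simp
  | succ n ih =>
    have hS2 : MemLp (∑ i ∈ range n, D i) 2 μ := memLp_finsetSum' _ fun i _ => hD2 i
    have hcross : Integrable (fun ω => 2 * ((∑ i ∈ range n, D i) ω * D n ω)) μ :=
      (hS2.integrable_mul (hD2 n)).const_mul 2
    have hleft : Integrable (fun ω => (∑ i ∈ range n, D i) ω ^ 2
        + 2 * ((∑ i ∈ range n, D i) ω * D n ω)) μ := hS2.integrable_sq.add hcross
    calc ∫ ω, (∑ i ∈ range (n + 1), D i) ω ^ 2 ∂μ
        = ∫ ω, ((∑ i ∈ range n, D i) ω ^ 2 + 2 * ((∑ i ∈ range n, D i) ω * D n ω))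
            + D n ω ^ 2 ∂μ := by
          congr with ω
          rw [sum_range_succ, Pi.add_apply]
          ring
      _ = ∫ ω, (∑ i ∈ range n, D i) ω ^ 2 ∂μ
            + 2 * ∫ ω, (∑ i ∈ range n, D i) ω * D n ω ∂μ + ∫ ω, D n ω ^ 2 ∂μ := by
          rw [integral_add hleft (hD2 n).integrable_sq,
            integral_add hS2.integrable_sq hcross, integral_const_mul]
      _ = ∑ i ∈ range (n + 1), ∫ ω, D i ω ^ 2 ∂μ := by
          rw [hD.integral_sum_mul_eq_zero hD2, ih, sum_range_succ, mul_zero, add_zero]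

lemma ae_exists_tendsto_sum_real [IsFiniteMeasure μ] {D : ℕ → Ω → ℝ}
    (hD : IsMartingaleDiff D ℱ μ) (hD2 : ∀ n, MemLp (D n) 2 μ)
    (hsum : Summable fun n => ∫ ω, D n ω ^ 2 ∂μ) :
    ∀ᵐ ω ∂μ, ∃ c, Tendsto (fun n => ∑ i ∈ range n, D i ω) atTop (𝓝 c) := by
  set R : ℝ := μ.real Set.univ + ∑' n, ∫ ω, D n ω ^ 2 ∂μ
  have hbound (n : ℕ) : ∫ ω, ‖(∑ i ∈ range n, D i) ω‖ ∂μ ≤ R := by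
    have hS2 : Integrable (fun ω => (∑ i ∈ range n, D i) ω ^ 2) μ :=
      (memLp_finsetSum' _ fun i _ => hD2 i).integrable_sq
    calc ∫ ω, ‖(∑ i ∈ range n, D i) ω‖ ∂μ
        ≤ ∫ ω, 1 + (∑ i ∈ range n, D i) ω ^ 2 ∂μ := by
          refine integral_mono (hD.martingale_sum.integrable n).norm
            ((integrable_const 1).add hS2) fun ω => ?_
          change ‖(∑ i ∈ range n, D i) ω‖ ≤ 1 + (∑ i ∈ range n, D i) ω ^ 2
          rw [Real.norm_eq_abs, ← sq_abs]
          nlinarith [sq_nonneg (|(∑ i ∈ range n, D i) ω| - 1)]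
      _ = μ.real Set.univ + ∑ i ∈ range n, ∫ ω, D i ω ^ 2 ∂μ := by
          rw [integral_add (integrable_const 1) hS2, hD.integral_sum_sq hD2]
          simp
      _ ≤ R := add_le_add le_rfl <|
          hsum.sum_le_tsum _ fun i _ => integral_nonneg fun ω => sq_nonneg _
  have hconv := hD.martingale_sum.submartingale.exists_ae_tendsto_of_bdd (R := R.toNNReal)
    fun n => by
      rw [eLpNorm_one_eq_lintegral_enorm,
        ← ofReal_integral_norm_eq_lintegral_enorm (hD.martingale_sum.integrable n)]
      exact ENNReal.ofReal_le_ofReal (hbound n)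
  simpa only [Finset.sum_apply] using hconv

lemma ae_exists_tendsto_sum [FiniteDimensional ℝ E] [IsFiniteMeasure μ] {D : ℕ → Ω → E}
    (hD : IsMartingaleDiff D ℱ μ) (hD2 : ∀ n, MemLp (D n) 2 μ)
    (hsum : Summable fun n => ∫ ω, ‖D n ω‖ ^ 2 ∂μ) :
    ∀ᵐ ω ∂μ, ∃ x, Tendsto (fun n => ∑ i ∈ range n, D i ω) atTop (𝓝 x) := by
  refine ae_exists_tendsto_of_forall_dual fun φ => ?_
  have hφ2 (n : ℕ) : MemLp (fun ω => φ (D n ω)) 2 μ := φ.comp_memLp' (hD2 n)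
  have hφ_le (n : ℕ) : ∫ ω, φ (D n ω) ^ 2 ∂μ ≤ ‖φ‖ ^ 2 * ∫ ω, ‖D n ω‖ ^ 2 ∂μ := by
    rw [← integral_const_mul]
    refine integral_mono (hφ2 n).integrable_sq
      (((hD2 n).integrable_norm_pow two_ne_zero).const_mul _) fun ω => ?_
    change φ (D n ω) ^ 2 ≤ ‖φ‖ ^ 2 * ‖D n ω‖ ^ 2
    rw [← mul_pow, ← sq_abs, ← Real.norm_eq_abs]
    gcongr
    exact φ.le_opNorm _
  simpa only [map_sum] using (hD.clm_comp φ).ae_exists_tendsto_sum_real hφ2 <|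
    (hsum.mul_left _).of_nonneg_of_le (fun n => integral_nonneg fun ω => sq_nonneg _) hφ_le

lemma ae_tendsto_average_zero [FiniteDimensional ℝ E] [IsFiniteMeasure μ] {D : ℕ → Ω → E}
    (hD : IsMartingaleDiff D ℱ μ) (hD2 : ∀ n, MemLp (D n) 2 μ)
    (hsum : Summable fun n : ℕ => ((n : ℝ) + 1)⁻¹ ^ 2 * ∫ ω, ‖D n ω‖ ^ 2 ∂μ) :
    ∀ᵐ ω ∂μ, Tendsto (fun n : ℕ => (n : ℝ)⁻¹ • ∑ i ∈ range n, D i ω) atTop (𝓝 0) := by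
  have hconv := (hD.const_smul fun n => ((n : ℝ) + 1)⁻¹).ae_exists_tendsto_sum
    (fun n => (hD2 n).const_smul _)
    (by simpa only [Pi.smul_apply, norm_smul, mul_pow, integral_const_mul, Real.norm_eq_abs,
      sq_abs] using hsum)
  filter_upwards [hconv] with ω ⟨x, hx⟩
  exact tendsto_average_zero_of_tendsto_sum_inv_smul hx

lemma ae_tendsto_average_zero_of_norm_le [FiniteDimensional ℝ E] [IsFiniteMeasure μ]
    {D : ℕ → Ω → E} (hD : IsMartingaleDiff D ℱ μ) {C : ℝ} (hC : ∀ n, ∀ᵐ ω ∂μ, ‖D n ω‖ ≤ C) :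
    ∀ᵐ ω ∂μ, Tendsto (fun n : ℕ => (n : ℝ)⁻¹ • ∑ i ∈ range n, D i ω) atTop (𝓝 0) := by
  have hD2 (n : ℕ) : MemLp (D n) 2 μ := .of_bound (hD.integrable n).aestronglyMeasurable C (hC n)
  have hsq (n : ℕ) : ∫ ω, ‖D n ω‖ ^ 2 ∂μ ≤ μ.real Set.univ * C ^ 2 := by
    rw [← smul_eq_mul, ← integral_const]
    refine integral_mono_ae ((hD2 n).integrable_norm_pow two_ne_zero) (integrable_const _) ?_
    filter_upwards [hC n] with ω hω
    gcongr
  have hinv : Summable fun n : ℕ => ((n : ℝ) + 1)⁻¹ ^ 2 := by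
    simpa [inv_pow] using
      (summable_nat_add_iff 1).2 (Real.summable_nat_pow_inv (p := 2).2 one_lt_two)
  refine hD.ae_tendsto_average_zero hD2 <|
    (hinv.mul_right (μ.real Set.univ * C ^ 2)).of_nonneg_of_le (fun n => ?_) fun n => ?_
  · exact mul_nonneg (by positivity) (integral_nonneg fun ω => by positivity)
  · exact mul_le_mul_of_nonneg_left (hsq n) (by positivity)

end IsMartingaleDiff

section MeanErgodic

lemma pow_apply_eq_add_nsmul_sub {R M : Type*} [Ring R] [AddCommGroup M] [Module R M]
    {L : M →ₗ[R] M} {x : M} (hx : L (L x - x) = L x - x) (n : ℕ) :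
    (L ^ n) x = x + n • (L x - x) := by
  induction n with
  | zero => simp
  | succ n ih =>
    rw [pow_succ', Module.End.mul_apply, ih, map_add, map_nsmul, hx, succ_nsmul']
    abel

variable {E : Type*} [NormedAddCommGroup E] [NormedSpace ℝ E]

lemma disjoint_ker_range_sub_one {L : E →ₗ[ℝ] E} (hL : ∀ x, ∃ C, ∀ n, ‖(L ^ n) x‖ ≤ C) :
    Disjoint (L - 1).ker (L - 1).range := by
  rw [Submodule.disjoint_def]
  rintro _ hfix ⟨x, rfl⟩
  have hLx : L (L x - x) = L x - x := by
    simpa only [LinearMap.mem_ker, LinearMap.sub_apply, Module.End.one_apply, sub_eq_zero]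
      using hfix
  obtain ⟨C, hC⟩ := hL x
  have hzero := tendsto_inv_nat_smul_sub_of_norm_le hC
  have hconst : Tendsto (fun n : ℕ => (n : ℝ)⁻¹ • ((L ^ n) x - (L ^ 0) x)) atTop (𝓝 (L x - x)) := by
    refine tendsto_const_nhds.congr' ?_
    filter_upwards [eventually_ne_atTop 0] with n hn
    rw [pow_apply_eq_add_nsmul_sub hLx, pow_zero, Module.End.one_apply, add_sub_cancel_left,
      ← Nat.cast_smul_eq_nsmul ℝ, inv_smul_smul₀ (Nat.cast_ne_zero.2 hn)]
  exact tendsto_nhds_unique hconst hzero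

variable [FiniteDimensional ℝ E]

lemma isCompl_ker_range_sub_one {L : E →ₗ[ℝ] E} (hL : ∀ x, ∃ C, ∀ n, ‖(L ^ n) x‖ ≤ C) :
    IsCompl (L - 1).ker (L - 1).range :=
  (Submodule.isCompl_iff_disjoint _ _ (by
    rw [add_comm, LinearMap.finrank_range_add_finrank_ker])).2 (disjoint_ker_range_sub_one hL)

lemma tendsto_of_tendsto_projection_ker {T : E →ₗ[ℝ] E} (hT : IsCompl T.ker T.range) {ι : Type*}
    {l : Filter ι} [l.NeBot] {u : ι → E} {x : E}
    (hproj : Tendsto (fun i => T.ker.projection T.range hT (u i)) l (𝓝 x))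
    (hTu : Tendsto (fun i => T (u i)) l (𝓝 0)) : T x = 0 ∧ Tendsto u l (𝓝 x) := by
  let P := T.ker.projection T.range hT
  have hx : T x = 0 := T.ker.closed_of_finiteDimensional.mem_of_tendsto hproj <|
    .of_forall fun i => Submodule.projection_apply_mem hT (u i)
  have hker : (P.prod T).ker = ⊥ := by
    rw [LinearMap.ker_prod, Submodule.ker_projection, inf_comm, hT.inf_eq_bot]
  have hPx : (P.prod T) x = (x, 0) :=
    Prod.ext (Submodule.projection_apply_of_mem_left hT hx) hx
  refine ⟨hx, (LinearMap.isClosedEmbedding_of_injective hker).isEmbedding.tendsto_nhds_iff.2 ?_⟩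
  rw [hPx]
  exact hproj.prodMk_nhds hTu

end MeanErgodic

section ErgodicTheorem

variable {Ω E : Type*} {mΩ : MeasurableSpace Ω} {μ : Measure Ω} [IsFiniteMeasure μ]
  {ℱ : Filtration ℕ mΩ} [NormedAddCommGroup E] [NormedSpace ℝ E] [FiniteDimensional ℝ E]
  [CompleteSpace E] {x : ℕ → Ω → E} {C : ℝ}

lemma ae_exists_tendsto_average_of_martingale (hx : Martingale x ℱ μ)
    (hC : ∀ n, ∀ᵐ ω ∂μ, ‖x n ω‖ ≤ C) :
    ∀ᵐ ω ∂μ, ∃ y, Tendsto (fun n : ℕ => (n : ℝ)⁻¹ • ∑ i ∈ range n, x i ω) atTop (𝓝 y) := by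
  have hL1 (n : ℕ) : eLpNorm (x n) 1 μ ≤ (μ Set.univ).toNNReal * C.toNNReal := by
    refine (eLpNorm_le_of_ae_bound (hC n)).trans_eq ?_
    simp [ENNReal.ofReal]
  filter_upwards [ae_exists_tendsto_of_martingale hx hL1] with ω ⟨y, hy⟩
  exact ⟨y, hy.cesaro_smul⟩

variable {L : E →ₗ[ℝ] E}

lemma isMartingaleDiff_sub_apply (hmeas : ∀ n, StronglyMeasurable[ℱ n] (x n))
    (hint : ∀ n, Integrable (x n) μ)
    (hcond : ∀ n, μ[x (n + 1) | ℱ n] =ᵐ[μ] fun ω => L (x n ω)) :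
    IsMartingaleDiff (fun n ω => x (n + 1) ω - L (x n ω)) ℱ μ where
  stronglyMeasurable n := (hmeas (n + 1)).sub <|
    L.continuous_of_finiteDimensional.comp_stronglyMeasurable ((hmeas n).mono (ℱ.mono n.le_succ))
  integrable n := (hint (n + 1)).sub (L.toContinuousLinearMap.integrable_comp (hint n))
  condExp_eq_zero n := by
    have hLmeas : StronglyMeasurable[ℱ n] fun ω => L (x n ω) :=
      L.continuous_of_finiteDimensional.comp_stronglyMeasurable (hmeas n)
    have hLint : Integrable (fun ω => L (x n ω)) μ :=
      L.toContinuousLinearMap.integrable_comp (hint n)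
    filter_upwards [condExp_sub (hint (n + 1)) hLint (ℱ n), hcond n] with ω hsub hω
    rw [condExp_of_stronglyMeasurable (ℱ.le n) hLmeas hLint] at hsub
    exact hsub.trans (sub_eq_zero.2 hω)

lemma martingale_apply_of_apply_comp_eq {P : E →ₗ[ℝ] E} (hP : ∀ y, P (L y) = P y)
    (hmeas : ∀ n, StronglyMeasurable[ℱ n] (x n)) (hint : ∀ n, Integrable (x n) μ)
    (hcond : ∀ n, μ[x (n + 1) | ℱ n] =ᵐ[μ] fun ω => L (x n ω)) :
    Martingale (fun n ω => P (x n ω)) ℱ μ := by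
  refine martingale_nat
    (fun n => P.continuous_of_finiteDimensional.comp_stronglyMeasurable (hmeas n))
    (fun n => P.toContinuousLinearMap.integrable_comp (hint n)) fun n => ?_
  filter_upwards [P.toContinuousLinearMap.comp_condExp_comm (m := ℱ n) (hint (n + 1)), hcond n]
    with ω hcomm hω
  rw [← hP, ← hω]
  exact hcomm

lemma ae_tendsto_average_apply_sub_self (hmeas : ∀ n, StronglyMeasurable[ℱ n] (x n))
    (hC : ∀ n, ∀ᵐ ω ∂μ, ‖x n ω‖ ≤ C)
    (hcond : ∀ n, μ[x (n + 1) | ℱ n] =ᵐ[μ] fun ω => L (x n ω)) :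
    ∀ᵐ ω ∂μ, Tendsto (fun n : ℕ => (n : ℝ)⁻¹ • ∑ i ∈ range n, (L (x i ω) - x i ω)) atTop
      (𝓝 0) := by
  have hint (n : ℕ) : Integrable (x n) μ :=
    .of_bound ((hmeas n).mono (ℱ.le n)).aestronglyMeasurable C (hC n)
  have hdiff (n : ℕ) :
      ∀ᵐ ω ∂μ, ‖x (n + 1) ω - L (x n ω)‖ ≤ C + ‖L.toContinuousLinearMap‖ * C := by
    filter_upwards [hC n, hC (n + 1)] with ω hn hsucc
    exact (norm_sub_le _ _).trans
      (add_le_add hsucc (L.toContinuousLinearMap.le_opNorm_of_le hn))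
  filter_upwards [ae_all_iff.2 hC,
    (isMartingaleDiff_sub_apply hmeas hint hcond).ae_tendsto_average_zero_of_norm_le hdiff]
    with ω hbdd hmart
  have htelescope (n : ℕ) : ∑ i ∈ range n, (L (x i ω) - x i ω) =
      (x n ω - x 0 ω) - ∑ i ∈ range n, (x (i + 1) ω - L (x i ω)) := by
    rw [← sum_range_sub (fun i => x i ω), ← sum_sub_distrib]
    exact sum_congr rfl fun i _ => by abel
  simpa only [htelescope, smul_sub, sub_zero] using
    (tendsto_inv_nat_smul_sub_of_norm_le hbdd).sub hmart

theorem ae_exists_tendsto_average_of_condExp_eq (hL : ∀ y, ∃ R, ∀ n, ‖(L ^ n) y‖ ≤ R)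
    (hmeas : ∀ n, StronglyMeasurable[ℱ n] (x n)) (hC : ∀ n, ∀ᵐ ω ∂μ, ‖x n ω‖ ≤ C)
    (hcond : ∀ n, μ[x (n + 1) | ℱ n] =ᵐ[μ] fun ω => L (x n ω)) :
    ∀ᵐ ω ∂μ, ∃ y, L y = y ∧
      Tendsto (fun n : ℕ => (n : ℝ)⁻¹ • ∑ i ∈ range n, x i ω) atTop (𝓝 y) := by
  have hcompl := isCompl_ker_range_sub_one hL
  let P := (L - 1).ker.projection (L - 1).range hcompl
  have hPL (y : E) : P (L y) = P y := by
    rw [← sub_eq_zero, ← map_sub]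
    exact (Submodule.projection_apply_eq_zero_iff hcompl).2 ⟨y, rfl⟩
  have hint (n : ℕ) : Integrable (x n) μ :=
    .of_bound ((hmeas n).mono (ℱ.le n)).aestronglyMeasurable C (hC n)
  have hPC (n : ℕ) : ∀ᵐ ω ∂μ, ‖P (x n ω)‖ ≤ ‖P.toContinuousLinearMap‖ * C :=
    (hC n).mono fun ω hω => P.toContinuousLinearMap.le_opNorm_of_le hω
  filter_upwards [ae_exists_tendsto_average_of_martingale
    (martingale_apply_of_apply_comp_eq hPL hmeas hint hcond) hPC,
    ae_tendsto_average_apply_sub_self hmeas hC hcond] with ω ⟨y, hproj⟩ hinv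
  obtain ⟨hy, hlim⟩ := tendsto_of_tendsto_projection_ker hcompl (x := y)
    (u := fun n : ℕ => (n : ℝ)⁻¹ • ∑ i ∈ range n, x i ω)
    (by simpa only [map_smul, map_sum] using hproj)
    (by simpa only [map_smul, map_sum, LinearMap.sub_apply, Module.End.one_apply] using hinv)
  exact ⟨y, sub_eq_zero.1 hy, hlim⟩

end ErgodicTheorem

section PosSemidef

-- This norm induces the entrywise topology on matrices definitionally.
open scoped Matrix.Norms.L2Operator

variable {n : Type*}

lemma isClosed_setOf_posSemidef [Finite n] : IsClosed {σ : Matrix n n ℂ | σ.PosSemidef} := by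
  classical
  cases nonempty_fintype n
  open scoped MatrixOrder in
  simpa only [nonneg_iff_posSemidef] using CStarAlgebra.isClosed_nonneg (A := Matrix n n ℂ)

lemma span_setOf_posSemidef [Finite n] :
    Submodule.span ℂ {σ : Matrix n n ℂ | σ.PosSemidef} = ⊤ := by
  classical
  cases nonempty_fintype n
  open scoped MatrixOrder in
  simpa only [nonneg_iff_posSemidef] using CStarAlgebra.span_nonneg (A := Matrix n n ℂ)

variable [Fintype n]

lemma ofReal_re_trace_of_posSemidef {σ : Matrix n n ℂ} (hσ : σ.PosSemidef) :
    ((σ.trace.re : ℝ) : ℂ) = σ.trace :=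
  (Complex.eq_re_of_ofReal_le (r := 0) (by simpa using hσ.trace_nonneg)).symm

lemma re_trace_smul_inv_trace_smul_of_posSemidef {σ : Matrix n n ℂ} (hσ : σ.PosSemidef) :
    σ.trace.re • σ.trace⁻¹ • σ = σ := by
  by_cases htrace : σ.trace = 0
  · rw [hσ.trace_eq_zero_iff.1 htrace, smul_zero, smul_zero]
  · rw [← Complex.coe_smul, ofReal_re_trace_of_posSemidef hσ, smul_inv_smul₀ htrace]

lemma norm_le_trace_re_of_posSemidef [DecidableEq n] {σ : Matrix n n ℂ} (hσ : σ.PosSemidef) :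
    ‖σ‖ ≤ σ.trace.re := by
  have htrace : σ.trace.re = ∑ i, hσ.1.eigenvalues i := by
    simp [hσ.1.trace_eq_sum_eigenvalues]
  have hnorm : ‖σ‖ = ‖fun i => (hσ.1.eigenvalues i : ℂ)‖ := by
    conv_lhs => rw [hσ.1.spectral_theorem, Unitary.conjStarAlgAut_apply,
      ← Unitary.coe_star, CStarRing.norm_mul_coe_unitary, CStarRing.norm_coe_unitary_mul,
      l2_opNorm_diagonal]
    rfl
  rw [hnorm, htrace, pi_norm_le_iff_of_nonneg (sum_nonneg fun i _ => hσ.eigenvalues_nonneg i)]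
  intro i
  rw [Complex.norm_of_nonneg (hσ.eigenvalues_nonneg i)]
  exact single_le_sum (fun j _ => hσ.eigenvalues_nonneg j) (mem_univ i)

end PosSemidef

section KrausMap

variable {n ι : Type*} [Fintype n] [Fintype ι]

/-- The map `σ ↦ ∑ j, A j * σ * (A j)ᴴ` with Kraus operators `A`, which is the paper's `L`. -/
def krausMap (A : ι → Matrix n n ℂ) : Matrix n n ℂ →ₗ[ℂ] Matrix n n ℂ where
  toFun σ := ∑ j, A j * σ * (A j)ᴴ
  map_add' σ τ := by simp only [Matrix.mul_add, Matrix.add_mul, sum_add_distrib]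
  map_smul' c σ := by simp only [Matrix.mul_smul, Matrix.smul_mul, smul_sum, RingHom.id_apply]

lemma krausMap_apply (A : ι → Matrix n n ℂ) (σ : Matrix n n ℂ) :
    krausMap A σ = ∑ j, A j * σ * (A j)ᴴ := rfl

lemma posSemidef_krausMap (A : ι → Matrix n n ℂ) {σ : Matrix n n ℂ} (hσ : σ.PosSemidef) :
    (krausMap A σ).PosSemidef :=
  posSemidef_sum _ fun j _ => hσ.mul_mul_conjTranspose_same (A j)

lemma posSemidef_krausMap_pow (A : ι → Matrix n n ℂ) {σ : Matrix n n ℂ} (hσ : σ.PosSemidef)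
    (m : ℕ) : ((krausMap A ^ m) σ).PosSemidef := by
  induction m with
  | zero => simpa using hσ
  | succ m ih =>
    rw [pow_succ', Module.End.mul_apply]
    exact posSemidef_krausMap A ih

variable [DecidableEq n] {A : ι → Matrix n n ℂ}

lemma trace_krausMap (hA : ∑ j, (A j)ᴴ * A j = 1) (σ : Matrix n n ℂ) :
    (krausMap A σ).trace = σ.trace :=
  calc (krausMap A σ).trace = ∑ j, ((A j)ᴴ * A j * σ).trace := by
        rw [krausMap_apply, trace_sum]
        exact sum_congr rfl fun j _ => by rw [trace_mul_comm, Matrix.mul_assoc]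
    _ = σ.trace := by rw [← trace_sum, ← Matrix.sum_mul, hA, Matrix.one_mul]

lemma trace_krausMap_pow (hA : ∑ j, (A j)ᴴ * A j = 1) (σ : Matrix n n ℂ) (m : ℕ) :
    ((krausMap A ^ m) σ).trace = σ.trace := by
  induction m with
  | zero => simp
  | succ m ih => rw [pow_succ', Module.End.mul_apply, trace_krausMap hA, ih]

open scoped Matrix.Norms.L2Operator in
lemma exists_norm_krausMap_pow_le (hA : ∑ j, (A j)ᴴ * A j = 1) (σ : Matrix n n ℂ) :
    ∃ C, ∀ m, ‖(krausMap A ^ m) σ‖ ≤ C := by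
  have hσ : σ ∈ Submodule.span ℂ {τ : Matrix n n ℂ | τ.PosSemidef} := by
    rw [span_setOf_posSemidef]
    exact Submodule.mem_top
  induction hσ using Submodule.span_induction with
  | mem τ hτ =>
    refine ⟨τ.trace.re, fun m => ?_⟩
    rw [← trace_krausMap_pow hA τ m]
    exact norm_le_trace_re_of_posSemidef (posSemidef_krausMap_pow A hτ m)
  | zero => exact ⟨0, fun m => by simp⟩
  | add τ τ' _ _ hτ hτ' =>
    obtain ⟨C, hC⟩ := hτ
    obtain ⟨C', hC'⟩ := hτ'
    refine ⟨C + C', fun m => ?_⟩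
    rw [map_add]
    exact (norm_add_le _ _).trans (add_le_add (hC m) (hC' m))
  | smul c τ _ hτ =>
    obtain ⟨C, hC⟩ := hτ
    refine ⟨‖c‖ * C, fun m => ?_⟩
    rw [map_smul, norm_smul]
    exact mul_le_mul_of_nonneg_left (hC m) (norm_nonneg c)

end KrausMap

section Density

variable {k : ℕ}

lemma isClosed_setOf_isDensity : IsClosed {σ : Matrix (Fin k) (Fin k) ℂ | IsDensity σ} :=
  isClosed_setOf_posSemidef.inter (isClosed_eq (by fun_prop) continuous_const)

lemma isDensity_average {s : ℕ → Matrix (Fin k) (Fin k) ℂ} (hs : ∀ i, IsDensity (s i)) {n : ℕ}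
    (hn : n ≠ 0) : IsDensity ((n : ℝ)⁻¹ • ∑ i ∈ Icc 1 n, s i) := by
  refine ⟨(posSemidef_sum _ fun i _ => (hs i).1).smul (by positivity), ?_⟩
  simp [trace_smul, trace_sum, (hs _).2, Complex.real_smul, hn]

open scoped Matrix.Norms.L2Operator in
lemma IsDensity.norm_le_one {σ : Matrix (Fin k) (Fin k) ℂ} (hσ : IsDensity σ) : ‖σ‖ ≤ 1 := by
  simpa [hσ.2] using norm_le_trace_re_of_posSemidef hσ.1

end Density

instance {k : ℕ} : BorelSpace (Matrix (Fin k) (Fin k) ℂ) :=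
  inferInstanceAs (BorelSpace (Fin k → Fin k → ℂ))

section Step

variable {d : ℕ}

lemma dir_injective : Function.Injective (dir d) := by
  intro i i' h
  have hi := i.2
  ext
  by_cases hid : (i : ℕ) < d
  · have hval := congrFun h ⟨i, hid⟩
    simp only [dir, hid, if_true] at hval
    split_ifs at hval <;> omega
  · have hval := congrFun h ⟨i - d, by omega⟩
    simp only [dir, hid, if_true, if_false] at hval
    split_ifs at hval
    omega

/-- The indicator of the event that the walk `X` makes the step `dir d j` from time `n` to time
`n + 1`. -/
def stepIndicator {Ω : Type*} (X : ℕ → Ω → Fin d → ℤ) (n : ℕ) (j : Fin (2 * d)) (ω : Ω) : ℝ :=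
  if X (n + 1) ω = X n ω + dir d j then 1 else 0

variable {Ω : Type*} (X : ℕ → Ω → Fin d → ℤ) (n : ℕ)

lemma norm_stepIndicator_le_one (j : Fin (2 * d)) (ω : Ω) : ‖stepIndicator X n j ω‖ ≤ 1 := by
  simp only [stepIndicator, apply_ite norm, norm_one, norm_zero]
  split_ifs
  · exact le_rfl
  · exact zero_le_one

lemma sum_stepIndicator_le_one (ω : Ω) : ∑ j, stepIndicator X n j ω ≤ 1 := by
  simp only [stepIndicator, sum_boole, Nat.cast_le_one, card_le_one, mem_filter_univ]
  intro i hi j hj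
  exact dir_injective (add_left_cancel (hi.symm.trans hj))

end Step

namespace IsQTraj

open scoped Matrix.Norms.L2Operator

variable {k d : ℕ} {Ω : Type} {mΩ : MeasurableSpace Ω} {A : Fin (2 * d) → Matrix (Fin k) (Fin k) ℂ}
  {μ : Measure Ω} {ℱ : Filtration ℕ mΩ} {ρ : ℕ → Ω → Matrix (Fin k) (Fin k) ℂ}
  {X : ℕ → Ω → Fin d → ℤ}

lemma measurable_stepIndicator (hQT : IsQTraj A μ ℱ ρ X) (n : ℕ) (j : Fin (2 * d)) :
    Measurable (stepIndicator X n j) :=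
  .ite (measurableSet_eq_fun ((hQT.adapted_X (n + 1)).mono (ℱ.le _) le_rfl)
    (((hQT.adapted_X n).mono (ℱ.le n) le_rfl).add_const _)) measurable_const measurable_const

lemma stronglyMeasurable_state (hQT : IsQTraj A μ ℱ ρ X) (n : ℕ) :
    StronglyMeasurable[ℱ n] (ρ n) :=
  (hQT.adapted_ρ n).stronglyMeasurable

lemma norm_state_le_one (hQT : IsQTraj A μ ℱ ρ X) (n : ℕ) : ∀ᵐ ω ∂μ, ‖ρ n ω‖ ≤ 1 :=
  (hQT.density n).mono fun _ hω => hω.norm_le_one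

lemma ae_stepIndicator_smul_state (hQT : IsQTraj A μ ℱ ρ X) (n : ℕ) (j : Fin (2 * d)) :
    ∀ᵐ ω ∂μ, stepIndicator X n j ω • ρ (n + 1) ω =
      stepIndicator X n j ω • (A j * ρ n ω * (A j)ᴴ).trace⁻¹ • (A j * ρ n ω * (A j)ᴴ) := by
  filter_upwards [hQT.update n j] with ω hupdate
  by_cases hstep : X (n + 1) ω = X n ω + dir d j
  · rw [hupdate hstep]
  · simp only [stepIndicator, if_neg hstep, zero_smul]

variable [IsFiniteMeasure μ]

lemma integrable_stepIndicator (hQT : IsQTraj A μ ℱ ρ X) (n : ℕ) (j : Fin (2 * d)) :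
    Integrable (stepIndicator X n j) μ :=
  .of_bound (hQT.measurable_stepIndicator n j).aestronglyMeasurable 1
    (ae_of_all _ (norm_stepIndicator_le_one X n j))

lemma integrable_state (hQT : IsQTraj A μ ℱ ρ X) (n : ℕ) : Integrable (ρ n) μ :=
  .of_bound ((hQT.stronglyMeasurable_state n).mono (ℱ.le n)).aestronglyMeasurable 1
    (hQT.norm_state_le_one n)

lemma integrable_stepIndicator_smul_state (hQT : IsQTraj A μ ℱ ρ X) (n : ℕ) (j : Fin (2 * d)) :
    Integrable (stepIndicator X n j • ρ (n + 1)) μ :=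
  (hQT.integrable_state (n + 1)).bdd_smul 1
    (hQT.measurable_stepIndicator n j).aestronglyMeasurable
    (ae_of_all _ (norm_stepIndicator_le_one X n j))

lemma condExp_sum_stepIndicator (hA : ∑ j, (A j)ᴴ * A j = 1) (hQT : IsQTraj A μ ℱ ρ X) (n : ℕ) :
    μ[∑ j, stepIndicator X n j | ℱ n] =ᵐ[μ] 1 := by
  filter_upwards [condExp_finsetSum (fun j _ => hQT.integrable_stepIndicator n j) (ℱ n),
    ae_all_iff.2 (hQT.prob n), hQT.density n] with ω hsum hprob hdensity
  calc (μ[∑ j, stepIndicator X n j | ℱ n]) ω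
      = ∑ j, (A j * ρ n ω * (A j)ᴴ).trace.re := by
        rw [hsum, Finset.sum_apply]
        exact sum_congr rfl fun j _ => hprob j
    _ = (krausMap A (ρ n ω)).trace.re := by rw [krausMap_apply, trace_sum, Complex.re_sum]
    _ = 1 := by rw [trace_krausMap hA, hdensity.2, Complex.one_re]

lemma ae_sum_stepIndicator_eq_one (hA : ∑ j, (A j)ᴴ * A j = 1) (hQT : IsQTraj A μ ℱ ρ X) (n : ℕ) :
    ∀ᵐ ω ∂μ, ∑ j, stepIndicator X n j ω = 1 := by
  have hint : Integrable (fun ω => ∑ j, stepIndicator X n j ω) μ :=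
    integrable_finsetSum _ fun j _ => hQT.integrable_stepIndicator n j
  have hmean : ∫ ω, ∑ j, stepIndicator X n j ω ∂μ = ∫ _, 1 ∂μ := by
    calc ∫ ω, ∑ j, stepIndicator X n j ω ∂μ = ∫ ω, (∑ j, stepIndicator X n j) ω ∂μ := by
          simp only [Finset.sum_apply]
      _ = ∫ _, 1 ∂μ := by
          rw [← integral_condExp (ℱ.le n), integral_congr_ae (hQT.condExp_sum_stepIndicator hA n)]
          rfl
  have hdefect := (integral_eq_zero_iff_of_nonneg
    (fun ω => sub_nonneg.2 (sum_stepIndicator_le_one X n ω)) ((integrable_const 1).sub hint)).1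
    (by rw [integral_sub (integrable_const 1) hint, hmean, sub_self])
  filter_upwards [hdefect] with ω hω
  exact (sub_eq_zero.1 hω).symm

lemma condExp_stepIndicator_smul_state (hQT : IsQTraj A μ ℱ ρ X) (n : ℕ) (j : Fin (2 * d)) :
    μ[stepIndicator X n j • ρ (n + 1) | ℱ n] =ᵐ[μ] fun ω => A j * ρ n ω * (A j)ᴴ := by
  let G : Matrix (Fin k) (Fin k) ℂ → Matrix (Fin k) (Fin k) ℂ :=
    fun σ => (A j * σ * (A j)ᴴ).trace⁻¹ • (A j * σ * (A j)ᴴ)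
  have hG : StronglyMeasurable[ℱ n] fun ω => G (ρ n ω) := by
    have hconj : Continuous fun σ : Matrix (Fin k) (Fin k) ℂ => A j * σ * (A j)ᴴ := by fun_prop
    exact (hconj.matrix_trace.measurable.inv.smul hconj.measurable).comp
      (hQT.adapted_ρ n) |>.stronglyMeasurable
  have hupdate : stepIndicator X n j • ρ (n + 1) =ᵐ[μ] stepIndicator X n j • fun ω => G (ρ n ω) :=
    hQT.ae_stepIndicator_smul_state n j
  have hint : Integrable (stepIndicator X n j • fun ω => G (ρ n ω)) μ :=
    (hQT.integrable_stepIndicator_smul_state n j).congr hupdate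
  filter_upwards [condExp_congr_ae hupdate, condExp_smul_of_aestronglyMeasurable_right
    (hQT.integrable_stepIndicator n j) hint hG.aestronglyMeasurable, hQT.prob n j,
    hQT.density n] with ω hcongr hpull hprob hdensity
  rw [hcongr, hpull]
  exact (congrArg (· • G (ρ n ω)) hprob).trans <|
    re_trace_smul_inv_trace_smul_of_posSemidef (hdensity.1.mul_mul_conjTranspose_same (A j))

theorem condExp_state_succ (hA : ∑ j, (A j)ᴴ * A j = 1) (hQT : IsQTraj A μ ℱ ρ X) (n : ℕ) :
    μ[ρ (n + 1) | ℱ n] =ᵐ[μ] fun ω => krausMap A (ρ n ω) := by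
  have hsplit : ρ (n + 1) =ᵐ[μ] ∑ j, stepIndicator X n j • ρ (n + 1) := by
    filter_upwards [hQT.ae_sum_stepIndicator_eq_one hA n] with ω hω
    simp only [Finset.sum_apply, Pi.smul_apply', ← sum_smul, hω, one_smul]
  filter_upwards [condExp_congr_ae hsplit,
    condExp_finsetSum (fun j _ => hQT.integrable_stepIndicator_smul_state n j) (ℱ n),
    ae_all_iff.2 (hQT.condExp_stepIndicator_smul_state n)] with ω hcongr hsum hstep
  rw [hcongr, hsum, Finset.sum_apply, krausMap_apply]
  exact sum_congr rfl fun j _ => hstep j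

theorem ae_exists_tendsto_average (hA : ∑ j, (A j)ᴴ * A j = 1) (hQT : IsQTraj A μ ℱ ρ X) :
    ∀ᵐ ω ∂μ, ∃ θ, Tendsto (fun n : ℕ => (n : ℝ)⁻¹ • ∑ i ∈ Icc 1 n, ρ i ω) atTop (𝓝 θ) ∧
      IsDensity θ ∧ krausMap A θ = θ := by
  have hbdd (σ : Matrix (Fin k) (Fin k) ℂ) :
      ∃ C, ∀ m, ‖((krausMap A).restrictScalars ℝ ^ m) σ‖ ≤ C := by
    simpa only [Module.End.pow_apply, LinearMap.coe_restrictScalars] using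
      exists_norm_krausMap_pow_le hA σ
  have hergodic := ae_exists_tendsto_average_of_condExp_eq hbdd hQT.stronglyMeasurable_state
    hQT.norm_state_le_one (hQT.condExp_state_succ hA)
  filter_upwards [hergodic, ae_all_iff.2 hQT.density] with ω ⟨θ, hfix, hlim⟩ hdensity
  have hlim_Icc :=
    tendsto_average_Icc_of_tendsto_average_range (fun n => (hdensity n).norm_le_one) hlim
  refine ⟨θ, hlim_Icc, isClosed_setOf_isDensity.mem_of_tendsto hlim_Icc ?_, hfix⟩
  filter_upwards [eventually_ne_atTop 0] with n hn
  exact isDensity_average hdensity hn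

end IsQTraj

/-- (Ergodic theorem for quantum trajectories.) The Cesàro means
`(1/n) Σ_{i=1}^n ρ_i` converge almost surely to a random density matrix `θ_∞` which is
almost surely an invariant state of `L`; if moreover `L` has a unique invariant state
`ρ_∞`, the Cesàro means converge almost surely to `ρ_∞`. -/
theorem stmt3 {k d : ℕ} (hd : 1 ≤ d)
    (A : Fin (2 * d) → Matrix (Fin k) (Fin k) ℂ)
    (hA : ∑ j, (A j)ᴴ * A j = 1)
    {Ω : Type} {mΩ : MeasurableSpace Ω} (μ : Measure Ω) [IsProbabilityMeasure μ]
    (ℱ : Filtration ℕ mΩ)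
    (ρ : ℕ → Ω → Matrix (Fin k) (Fin k) ℂ) (X : ℕ → Ω → Fin d → ℤ)
    (hQT : IsQTraj A μ ℱ ρ X) :
    ∃ θ : Ω → Matrix (Fin k) (Fin k) ℂ,
      (∀ᵐ ω ∂μ,
        Tendsto (fun n : ℕ => (n : ℝ)⁻¹ • ∑ i ∈ Finset.Icc 1 n, ρ i ω) atTop (nhds (θ ω)) ∧
        IsDensity (θ ω) ∧ (∑ j, A j * θ ω * (A j)ᴴ) = θ ω) ∧
      (∀ ρ_inf : Matrix (Fin k) (Fin k) ℂ, IsDensity ρ_inf →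
        (∑ j, A j * ρ_inf * (A j)ᴴ) = ρ_inf →
        (∀ σ, IsDensity σ → (∑ j, A j * σ * (A j)ᴴ) = σ → σ = ρ_inf) →
        ∀ᵐ ω ∂μ,
          Tendsto (fun n : ℕ => (n : ℝ)⁻¹ • ∑ i ∈ Finset.Icc 1 n, ρ i ω) atTop
            (nhds ρ_inf)) := by
  obtain ⟨θ, hθ⟩ := (hQT.ae_exists_tendsto_average hA).choice
  refine ⟨θ, hθ, fun ρ_inf _ _ hunique => ?_⟩
  filter_upwards [hθ] with ω ⟨hlim, hdensity, hfix⟩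
  rwa [hunique (θ ω) hdensity hfix] at hlim
end
end

section
/- (Solution of the Poisson equation.) Assume (H1) and fix l ∈ ℝ^d; let L_l be a solution of L_l - L^*(L_l) = Σ_{i=1}^{2d} (e_i·l) A_i^* A_i - (m·l) I. Define f on (density matrices on ℂ^k) × {e_1,…,e_{2d}} by f(ρ, x) = Re Tr(ρ L_l) + x·l, and let P be the transition operator of the Markov chain (ρ_n, ΔX_n): (Pf)(ρ, x) = Σ_{j=1}^{2d} Tr(A_j ρ A_j^*) f( A_j ρ A_j^* / Tr(A_j ρ A_j^*), e_j ), where terms with Tr(A_j ρ A_j^*) = 0 are omitted. Then for every density matrix ρ and every x ∈ {e_1,…,e_{2d}}, f(ρ, x) − (Pf)(ρ, x) = x·l − m·l. -/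
open MeasureTheory Filter Matrix Finset
open scoped ComplexOrder

noncomputable section

/-- The drift vector `m = Σ_{i=1}^{2d} Tr(A_i ρ_∞ A_i^*) e_i ∈ ℝ^d`. -/
def mvec {k d : ℕ} (A : Fin (2 * d) → Matrix (Fin k) (Fin k) ℂ)
    (ρinf : Matrix (Fin k) (Fin k) ℂ) : Fin d → ℝ :=
  fun j => ∑ i, ((A i * ρinf * (A i)ᴴ).trace).re * dirR d i j

/-- The function `f(ρ, x) = Re Tr(ρ L_l) + x·l` solving the Poisson equation. -/
def fPoisson {k d : ℕ} (Ll : Matrix (Fin k) (Fin k) ℂ) (l : Fin d → ℝ)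
    (ρ : Matrix (Fin k) (Fin k) ℂ) (x : Fin d → ℝ) : ℝ :=
  ((ρ * Ll).trace).re + ∑ j, x j * l j

/-- The transition operator of the chain `(ρ_n, ΔX_n)` applied to `f`
(`(Pf)(ρ,x)` does not depend on `x`; terms with `Tr(A_j ρ A_j^*) = 0` are omitted,
since then `0⁻¹ • ... = 0` and the factor in front vanishes). -/
def Pf {k d : ℕ} (A : Fin (2 * d) → Matrix (Fin k) (Fin k) ℂ)
    (Ll : Matrix (Fin k) (Fin k) ℂ) (l : Fin d → ℝ)
    (ρ : Matrix (Fin k) (Fin k) ℂ) : ℝ :=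
  ∑ i, ((A i * ρ * (A i)ᴴ).trace).re *
    fPoisson Ll l (((A i * ρ * (A i)ᴴ).trace)⁻¹ • (A i * ρ * (A i)ᴴ)) (dirR d i)

section QuantumTrajectory

theorem trace_mul_mul_mul_cycle {R m n p q : Type*} [NonUnitalCommSemiring R] [Fintype m]
    [Fintype n] [Fintype p] [Fintype q] (A : Matrix m n R) (B : Matrix n p R) (C : Matrix p q R)
    (D : Matrix q m R) : (A * B * C * D).trace = (B * (C * D * A)).trace := by
  rw [Matrix.mul_assoc, Matrix.mul_assoc A, trace_mul_comm]
  simp only [Matrix.mul_assoc]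

variable {𝕜 n ι : Type*} [RCLike 𝕜] [Fintype n]

/- If `M.trace = 0`, then `M.trace⁻¹` is the junk value `0`, but `M` vanishes by positivity. -/
theorem trace_smul_inv_trace_smul {M : Matrix n n 𝕜} (hM : M.PosSemidef) :
    M.trace • (M.trace⁻¹ • M) = M := by
  rcases eq_or_ne M.trace 0 with htrace | htrace
  · rw [hM.trace_eq_zero_iff.mp htrace, smul_zero, smul_zero]
  · exact smul_inv_smul₀ htrace M

theorem ofReal_re_trace {M : Matrix n n 𝕜} (hM : M.IsHermitian) :
    (RCLike.re M.trace : 𝕜) = M.trace := by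
  rw [← RCLike.conj_eq_iff_re, starRingEnd_apply, ← trace_conjTranspose, hM.eq]

theorem re_trace_mul_re_trace_normalized_mul {M : Matrix n n 𝕜} (hM : M.PosSemidef)
    (X : Matrix n n 𝕜) :
    RCLike.re M.trace * RCLike.re ((M.trace⁻¹ • M) * X).trace = RCLike.re (M * X).trace := by
  rw [← RCLike.re_ofReal_mul, ofReal_re_trace hM.isHermitian, ← smul_eq_mul, ← trace_smul,
    ← Matrix.smul_mul, trace_smul_inv_trace_smul hM]

variable [Fintype ι]

/-- The transition operator of the quantum trajectory with Kraus operators `A i`, applied to an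
observable `f` of the pair (state, last outcome): from `ρ`, outcome `i` occurs with probability
`Tr (A i ρ (A i)ᴴ)` and the state becomes `A i ρ (A i)ᴴ / Tr (A i ρ (A i)ᴴ)`. An outcome of
probability zero contributes nothing, whatever the value of `f` at the junk state `0`. -/
def trajectoryTransition (A : ι → Matrix n n 𝕜) (f : Matrix n n 𝕜 → ι → ℝ)
    (ρ : Matrix n n 𝕜) : ℝ :=
  ∑ i, RCLike.re (A i * ρ * (A i)ᴴ).trace *
    f ((A i * ρ * (A i)ᴴ).trace⁻¹ • (A i * ρ * (A i)ᴴ)) i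

/-- The observable `(ρ, i) ↦ Re Tr (ρ X) + v i`, affine in the state, with `v i` the increment
attached to outcome `i`. -/
def affineObservable (X : Matrix n n 𝕜) (v : ι → ℝ) (ρ : Matrix n n 𝕜) (i : ι) : ℝ :=
  RCLike.re (ρ * X).trace + v i

/- The outcome probability cancels the normalization of the new state, so the result is linear in
`ρ`; cyclicity of the trace then moves the Kraus operators onto the observable. -/
theorem trajectoryTransition_affineObservable (A : ι → Matrix n n 𝕜) (X : Matrix n n 𝕜)
    (v : ι → ℝ) {ρ : Matrix n n 𝕜} (hρ : ρ.PosSemidef) :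
    trajectoryTransition A (affineObservable X v) ρ =
      RCLike.re (ρ * (∑ i, (A i)ᴴ * X * A i + ∑ i, v i • ((A i)ᴴ * A i))).trace := by
  have outcome_contribution (i : ι) :
      RCLike.re (A i * ρ * (A i)ᴴ).trace *
          affineObservable X v ((A i * ρ * (A i)ᴴ).trace⁻¹ • (A i * ρ * (A i)ᴴ)) i =
        RCLike.re (ρ * ((A i)ᴴ * X * A i)).trace +
          v i * RCLike.re (ρ * ((A i)ᴴ * A i)).trace := by
    have probability : (A i * ρ * (A i)ᴴ).trace = (ρ * ((A i)ᴴ * A i)).trace := by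
      rw [trace_mul_cycle, trace_mul_comm]
    rw [affineObservable, mul_add,
      re_trace_mul_re_trace_normalized_mul (hρ.mul_mul_conjTranspose_same (A i)),
      trace_mul_mul_mul_cycle, probability, mul_comm (v i)]
  simp only [trajectoryTransition, outcome_contribution, Finset.sum_add_distrib, Matrix.mul_add,
    Matrix.mul_sum, Matrix.mul_smul, trace_add, trace_sum, trace_smul, map_add, map_sum,
    RCLike.smul_re]

theorem stmt6_general [DecidableEq n] (A : ι → Matrix n n 𝕜) (X : Matrix n n 𝕜) (v : ι → ℝ)
    (c : ℝ)
    (hX : X - ∑ i, (A i)ᴴ * X * A i = ∑ i, v i • ((A i)ᴴ * A i) - c • (1 : Matrix n n 𝕜))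
    {ρ : Matrix n n 𝕜} (hρ : ρ.PosSemidef) (htrace : ρ.trace = 1) (i : ι) :
    affineObservable X v ρ i - trajectoryTransition A (affineObservable X v) ρ = v i - c := by
  have hX_solved :
      X = (∑ i, (A i)ᴴ * X * A i + ∑ i, v i • ((A i)ᴴ * A i)) - c • (1 : Matrix n n 𝕜) := by
    rw [add_sub_assoc, ← hX, add_sub_cancel]
  have h_re_trace : RCLike.re (ρ * X).trace =
      trajectoryTransition A (affineObservable X v) ρ - c := by
    rw [trajectoryTransition_affineObservable A X v hρ]
    conv_lhs => rw [hX_solved]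
    rw [Matrix.mul_sub, trace_sub, map_sub, Matrix.mul_smul, Matrix.mul_one, trace_smul, htrace,
      RCLike.smul_re, RCLike.one_re, mul_one]
  rw [affineObservable, h_re_trace]
  ring

end QuantumTrajectory

/-- (Solution of the Poisson equation.) With `L_l` a solution of
`L_l - L^*(L_l) = Σ_i (e_i·l) A_i^* A_i - (m·l) I` and `f(ρ,x) = Re Tr(ρ L_l) + x·l`,
one has `f(ρ,x) - (Pf)(ρ,x) = x·l - m·l` for every density matrix `ρ` and every
`x ∈ {e_1, …, e_{2d}}`. -/
theorem stmt6 {k d : ℕ} (hd : 1 ≤ d)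
    (A : Fin (2 * d) → Matrix (Fin k) (Fin k) ℂ)
    (hA : ∑ j, (A j)ᴴ * A j = 1)
    (ρinf : Matrix (Fin k) (Fin k) ℂ) (hρinf : IsDensity ρinf)
    (hinv : (∑ j, A j * ρinf * (A j)ᴴ) = ρinf)
    (huniq : ∀ σ, IsDensity σ → (∑ j, A j * σ * (A j)ᴴ) = σ → σ = ρinf)
    (l : Fin d → ℝ) (Ll : Matrix (Fin k) (Fin k) ℂ)
    (hLl : Ll - (∑ i, (A i)ᴴ * Ll * A i) =
      (∑ i, (∑ j, dirR d i j * l j) • ((A i)ᴴ * A i)) -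
        (∑ j, mvec A ρinf j * l j) • (1 : Matrix (Fin k) (Fin k) ℂ)) :
    ∀ ρ : Matrix (Fin k) (Fin k) ℂ, IsDensity ρ → ∀ x : Fin (2 * d),
      fPoisson Ll l ρ (dirR d x) - Pf A Ll l ρ =
        (∑ j, dirR d x j * l j) - ∑ j, mvec A ρinf j * l j := fun _ hρ x =>
  stmt6_general A Ll (fun i => ∑ j, dirR d i j * l j) (∑ j, mvec A ρinf j * l j) hLl hρ.1 hρ.2 x
end
end
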